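/- h(n, 2K₂) = n for all n ≥ 7. -/

import Mathlib

open SimpleGraph

variable {V W : Type*}

/-- Two `Sym2` elements (edges) are vertex-disjoint. -/
def sym2Disjoint (e e' : Sym2 V) : Prop := ∀ v, v ∈ e → v ∉ e'

/-- Edge set of the copy of `G` in `H` given by an (injective) homomorphism. -/
def copyEdges (G : SimpleGraph V) (H : SimpleGraph W) (φ : G →g H) : Set (Sym2 W) :=
  Sym2.map φ '' G.edgeSet

/-- The edge set `E` is `f`-free. -/
def IsFreeSet (f : Sym2 W → Sym2 W) (E : Set (Sym2 W)) : Prop := ∀ e ∈ E, f e ∉ E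

/-- `f` is an edge mapping of `H` with `f e ≠ e` (equivalently `|f e ∩ e| ≤ 1`). -/
def IsEdgeMap (H : SimpleGraph W) (f : Sym2 W → Sym2 W) : Prop :=
  ∀ e ∈ H.edgeSet, f e ∈ H.edgeSet ∧ f e ≠ e

/-- `f` is an edge mapping of `H` with `f e ∩ e = ∅`. -/
def IsDisjEdgeMap (H : SimpleGraph W) (f : Sym2 W → Sym2 W) : Prop :=
  ∀ e ∈ H.edgeSet, f e ∈ H.edgeSet ∧ sym2Disjoint e (f e)

/-- `H` contains a copy of `G` (as a not necessarily induced subgraph). -/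
def Contains (G : SimpleGraph V) (H : SimpleGraph W) : Prop :=
  ∃ φ : G →g H, Function.Injective φ

/-- `H` has no `f`-free copy of `G`. -/
def NoFreeCopy (G : SimpleGraph V) (H : SimpleGraph W) (f : Sym2 W → Sym2 W) : Prop :=
  ∀ φ : G →g H, Function.Injective φ → ¬ IsFreeSet f (copyEdges G H φ)

/-- The Turán number `ex(n, G)`. -/
noncomputable def exNum (n : ℕ) (G : SimpleGraph V) : ℕ :=
  sSup {m | ∃ H : SimpleGraph (Fin n), H.edgeSet.ncard = m ∧ ¬ Contains G H}

/-- The parameter `h(n, G)`. -/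
noncomputable def hNum (n : ℕ) (G : SimpleGraph V) : ℕ :=
  sSup {m | ∃ (H : SimpleGraph (Fin n)) (f : Sym2 (Fin n) → Sym2 (Fin n)),
    H.edgeSet.ncard = m ∧ IsEdgeMap H f ∧ NoFreeCopy G H f}

/-- Independence number. -/
noncomputable def indepNum (G : SimpleGraph V) [Fintype V] : ℕ :=
  sSup {m | ∃ s : Finset V, (∀ v ∈ s, ∀ w ∈ s, ¬ G.Adj v w) ∧ s.card = m}

/-- The matching `tK₂` on `Fin (2t)`: vertices `2i, 2i+1` are matched. -/
def matching (t : ℕ) : SimpleGraph (Fin (2*t)) :=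
  SimpleGraph.fromRel (fun v w => (v : ℕ) / 2 = (w : ℕ) / 2)

/-- The star `K_{1,r}` on `Fin (r+1)`, with center `0`. -/
def starG (r : ℕ) : SimpleGraph (Fin (r+1)) :=
  SimpleGraph.fromRel (fun v _ => v = 0)

/- A pair of disjoint edges is `f`-free unless `f` sends one edge of the pair to the other, so `f`
charges every disjoint pair to one of its two edges. Between any two sets `A`, `B` of edges there
are therefore at most `|A| + |B|` disjoint pairs.

Suppose `H` has more than `n ≥ 7` edges, and let `c` be a vertex of maximum degree `t`. If `t ≤ 3`,
every edge is disjoint from at least three others, which is too many pairs. Otherwise each of the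
`a` edges avoiding `c` is disjoint from at least `t - 2` edges at `c`, whence
`a * (t - 2) ≤ a + t`. As `a ≥ 2` and `a + t ≥ 8`, this leaves only `(a, t) = (4, 4)` and `(2, 6)`,
with equality in both. By equality, every end of an edge avoiding `c` is adjacent to `c`, and `f`
maps these edges to edges at `c`, so they meet pairwise. Four of them share a vertex, which then has
degree at least `5`; two of them cover three vertices, so that three edges at `c` are disjoint from
both, giving six pairs on five edges. -/

open scoped Finset

section Sym2Disjoint

instance [Fintype V] [DecidableEq V] : DecidableRel (sym2Disjoint (V := V)) :=
  fun e e' ↦ inferInstanceAs (Decidable (∀ v, v ∈ e → v ∉ e'))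

lemma not_sym2Disjoint_iff {e e' : Sym2 V} : ¬ sym2Disjoint e e' ↔ ∃ v, v ∈ e ∧ v ∈ e' := by
  simp [sym2Disjoint]

lemma sym2Disjoint_mk_mk {a b c d : V} :
    sym2Disjoint s(a, b) s(c, d) ↔ (a ≠ c ∧ a ≠ d) ∧ b ≠ c ∧ b ≠ d := by
  simp [sym2Disjoint]

lemma exists_forall_mem_of_pairwise_not_sym2Disjoint {F : Finset (Sym2 V)}
    (hF : (F : Set (Sym2 V)).Pairwise fun e e' ↦ ¬ sym2Disjoint e e') (hcard : 3 < #F) :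
    ∃ v, ∀ e ∈ F, v ∈ e := by
  classical
  obtain ⟨e₁, he₁, e₂, he₂, hne⟩ := Finset.one_lt_card.1 (by omega : 1 < #F)
  obtain ⟨x, ⟨y, rfl⟩, z, rfl⟩ := not_sym2Disjoint_iff.1 (hF he₁ he₂ hne)
  refine ⟨x, fun e he ↦ by_contra fun hxe ↦ ?_⟩
  -- An edge avoiding `x` closes the triangle `xyz`, which then contains all of `F`.
  have hyz {e'} (he' : e' ∈ F) (hxe' : x ∉ e') : e' = s(y, z) := by
    have hmem {w} (hw : s(x, w) ∈ F) : w ∈ e' := by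
      obtain ⟨v, hv, hve'⟩ := not_sym2Disjoint_iff.1
        (hF hw he' (by rintro rfl; exact hxe' (Sym2.mem_mk_left x w)))
      rcases Sym2.mem_iff.1 hv with rfl | rfl
      · exact absurd hve' hxe'
      · exact hve'
    exact (Sym2.mem_and_mem_iff (by rintro rfl; exact hne rfl)).1 ⟨hmem he₁, hmem he₂⟩
  obtain rfl := hyz he hxe
  have htriangle : F ⊆ {s(x, y), s(x, z), s(y, z)} := by
    intro e' he'
    by_cases hxe' : x ∈ e'
    · obtain ⟨w, rfl⟩ := hxe'
      obtain ⟨v, hv, hvyz⟩ := not_sym2Disjoint_iff.1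
        (hF he' he (by rintro h; exact hxe (h ▸ Sym2.mem_mk_left x w)))
      grind
    · simp [hyz he' hxe']
  exact (Finset.card_le_card htriangle |>.trans Finset.card_le_three).not_gt hcard

lemma card_toFinset_union_toFinset_le_three [DecidableEq V] {e e' : Sym2 V}
    (h : ¬ sym2Disjoint e e') : #(e.toFinset ∪ e'.toFinset) ≤ 3 := by
  obtain ⟨v, ⟨a, rfl⟩, b, rfl⟩ := not_sym2Disjoint_iff.1 h
  calc #(s(v, a).toFinset ∪ s(v, b).toFinset)
      = #{v, a, b} := by congr 1; ext; grind [Sym2.mem_toFinset]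
    _ ≤ 3 := Finset.card_le_three

end Sym2Disjoint

section Counting

lemma sum_card_filter_le_of_eq_or_eq {α : Type*} [DecidableEq α] {r : α → α → Prop}
    [DecidableRel r] {f : α → α} {A B : Finset α}
    (h : ∀ a ∈ A, ∀ b ∈ B, r a b → f a = b ∨ f b = a) :
    ∑ a ∈ A, #{b ∈ B | r a b} ≤ #{a ∈ A | f a ∈ B} + #{b ∈ B | f b ∈ A} := by
  have hsub : (A.sigma fun a ↦ {b ∈ B | r a b}) ⊆
      ({a ∈ A | f a ∈ B}.image fun a ↦ ⟨a, f a⟩) ∪ {b ∈ B | f b ∈ A}.image fun b ↦ ⟨f b, b⟩ := by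
    rintro ⟨a, b⟩ hab
    obtain ⟨ha, hb, hr⟩ : a ∈ A ∧ b ∈ B ∧ r a b := by simpa using hab
    rcases h a ha b hb hr with rfl | rfl <;> simp [ha, hb]
  calc ∑ a ∈ A, #{b ∈ B | r a b}
      = #(A.sigma fun a ↦ {b ∈ B | r a b}) := (Finset.card_sigma _ _).symm
    _ ≤ _ := Finset.card_le_card hsub
    _ ≤ _ := Finset.card_union_le _ _
    _ ≤ _ := add_le_add Finset.card_image_le Finset.card_image_le

lemma card_mul_card_le_card_add_card_of_eq_or_eq {α : Type*} {f : α → α} {A B : Finset α}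
    (h : ∀ a ∈ A, ∀ b ∈ B, f a = b ∨ f b = a) : #A * #B ≤ #A + #B := by
  classical
  calc #A * #B
      = ∑ _a ∈ A, #{_b ∈ B | True} := by simp
    _ ≤ #{a ∈ A | f a ∈ B} + #{b ∈ B | f b ∈ A} :=
        sum_card_filter_le_of_eq_or_eq fun a ha b hb _ ↦ h a ha b hb
    _ ≤ #A + #B := add_le_add (Finset.card_filter_le _ _) (Finset.card_filter_le _ _)

lemma eq_four_or_eq_two_of_mul_sub_two_le {a t : ℕ} (ha : 2 ≤ a) (ht : 4 ≤ t) (hat : 8 ≤ a + t)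
    (h : a * (t - 2) ≤ a + t) : a = 4 ∧ t = 4 ∨ a = 2 ∧ t = 6 := by
  obtain ⟨a, rfl⟩ := Nat.exists_eq_add_of_le ha
  obtain ⟨t, rfl⟩ := Nat.exists_eq_add_of_le ht
  rw [show 4 + t - 2 = t + 2 by omega] at h
  have ht2 : t ≤ 2 := by nlinarith
  interval_cases t <;> omega

end Counting

/-- The map `f` sends, for every pair of disjoint edges of `H`, one of the two edges to the other.
For an edge map `f` this says that `H` has no `f`-free copy of `2K₂`. -/
def CoversDisjointPairs (H : SimpleGraph V) (f : Sym2 V → Sym2 V) : Prop :=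
  ∀ e ∈ H.edgeSet, ∀ e' ∈ H.edgeSet, sym2Disjoint e e' → f e = e' ∨ f e' = e

section MatchingTwo

variable {H : SimpleGraph V} {f : Sym2 V → Sym2 V}

lemma edgeSet_matching_two : (matching 2).edgeSet = {s(0, 1), s(2, 3)} := by
  ext ⟨a, b⟩
  fin_cases a <;> fin_cases b <;> simp [matching]

lemma copyEdges_matching_two (φ : matching 2 →g H) :
    copyEdges (matching 2) H φ = {s(φ 0, φ 1), s(φ 2, φ 3)} := by
  rw [copyEdges, edgeSet_matching_two, Set.image_pair, Sym2.map_mk, Sym2.map_mk]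

lemma exists_copyEdges_matching_two_eq {e e' : Sym2 V} (he : e ∈ H.edgeSet) (he' : e' ∈ H.edgeSet)
    (hd : sym2Disjoint e e') :
    ∃ φ : matching 2 →g H, Function.Injective φ ∧ copyEdges (matching 2) H φ = {e, e'} := by
  induction e with | _ a b
  induction e' with | _ c d
  rw [mem_edgeSet] at he he'
  obtain ⟨⟨hac, had⟩, hbc, hbd⟩ := sym2Disjoint_mk_mk.1 hd
  let φ : matching 2 →g H :=
    { toFun := ![a, b, c, d]
      map_rel' := by
        intro x y hxy
        simp only [matching, fromRel_adj] at hxy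
        fin_cases x <;> fin_cases y <;> simp_all [H.adj_comm] }
  refine ⟨φ, fun x y (hxy : ![a, b, c, d] x = ![a, b, c, d] y) ↦ ?_, copyEdges_matching_two φ⟩
  have := he.ne
  have := he'.ne
  fin_cases x <;> fin_cases y <;> simp_all

lemma noFreeCopy_matching_two_iff (hf : IsEdgeMap H f) :
    NoFreeCopy (matching 2) H f ↔ CoversDisjointPairs H f := by
  constructor
  · intro h e he e' he' hd
    obtain ⟨φ, hφ, hcopy⟩ := exists_copyEdges_matching_two_eq he he' hd
    by_contra! hne
    refine h φ hφ ?_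
    rw [hcopy]
    rintro g (rfl | rfl)
    · simp [(hf _ he).2, hne.1]
    · simp [(hf _ he').2, hne.2]
  · intro h φ hφ hfree
    have h01 : s(φ 0, φ 1) ∈ H.edgeSet := φ.map_adj (by simp [matching])
    have h23 : s(φ 2, φ 3) ∈ H.edgeSet := φ.map_adj (by simp [matching])
    have hd : sym2Disjoint s(φ 0, φ 1) s(φ 2, φ 3) := by
      simp [sym2Disjoint_mk_mk, hφ.eq_iff]
    rw [copyEdges_matching_two] at hfree
    rcases h _ h01 _ h23 hd with heq | heq
    · exact hfree s(φ 0, φ 1) (by simp) (by simp [heq])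
    · exact hfree s(φ 2, φ 3) (by simp) (by simp [heq])

end MatchingTwo

section LowerBound

variable {c u v : V}

lemma edgeSet_starGraph_sup_edge_ncard [Fintype V] (hcu : c ≠ u) (hcv : c ≠ v) (huv : u ≠ v) :
    (starGraph c ⊔ edge u v).edgeSet.ncard = Fintype.card V := by
  classical
  rw [← coe_edgeFinset, Set.ncard_coe_finset,
    card_edgeFinset_sup_edge _ (by simp [hcu.symm, hcv.symm]) huv,
    (isTree_starGraph c).card_edgeFinset]

lemma mem_of_mem_edgeSet_starGraph_sup_edge {e : Sym2 V}
    (he : e ∈ (starGraph c ⊔ edge u v).edgeSet) (hne : e ≠ s(u, v)) : c ∈ e := by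
  induction e with | _ a b
  have := edgeSet_edge_subset (v := u) (w := v)
  grind [edgeSet_sup, mem_edgeSet, starGraph_adj]

lemma exists_coversDisjointPairs_starGraph_sup_edge (hcu : c ≠ u) (hcv : c ≠ v) (huv : u ≠ v) :
    ∃ f, IsEdgeMap (starGraph c ⊔ edge u v) f ∧
      CoversDisjointPairs (starGraph c ⊔ edge u v) f := by
  classical
  have huv_mem : s(u, v) ∈ (starGraph c ⊔ edge u v).edgeSet := by simp [huv]
  have hcu_mem : s(c, u) ∈ (starGraph c ⊔ edge u v).edgeSet := by simp [hcu]
  refine ⟨fun e ↦ if e = s(u, v) then s(c, u) else s(u, v), fun e he ↦ ?_, fun e he e' he' hd ↦ ?_⟩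
  · dsimp only
    split_ifs with h
    · subst h
      exact ⟨hcu_mem, by simp [hcu, hcv]⟩
    · exact ⟨huv_mem, Ne.symm h⟩
  · by_cases h : e = s(u, v)
    · by_cases h' : e' = s(u, v)
      · subst h h'
        exact absurd (Sym2.mem_mk_left u v) (hd u (Sym2.mem_mk_left u v))
      · exact .inr (by simp [h, h'])
    · by_cases h' : e' = s(u, v)
      · exact .inl (by simp [h, h'])
      · exact absurd (mem_of_mem_edgeSet_starGraph_sup_edge he' h')
          (hd c (mem_of_mem_edgeSet_starGraph_sup_edge he h))

lemma exists_ncard_edgeSet_eq_and_noFreeCopy_matching_two [Fintype V] (hV : 3 ≤ Fintype.card V) :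
    ∃ (H : SimpleGraph V) (f : Sym2 V → Sym2 V),
      H.edgeSet.ncard = Fintype.card V ∧ IsEdgeMap H f ∧ NoFreeCopy (matching 2) H f := by
  obtain ⟨c, u, v, hcu, hcv, huv⟩ := Fintype.two_lt_card_iff.1 hV
  obtain ⟨f, hf, hcov⟩ := exists_coversDisjointPairs_starGraph_sup_edge hcu hcv huv
  exact ⟨_, f, edgeSet_starGraph_sup_edge_ncard hcu hcv huv, hf,
    (noFreeCopy_matching_two_iff hf).2 hcov⟩

end LowerBound

section UpperBound

variable [Fintype V] [DecidableEq V] {H : SimpleGraph V} [DecidableRel H.Adj]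
  {f : Sym2 V → Sym2 V} {c : V}

lemma card_filter_not_sym2Disjoint_lt {x y : V} (hxy : H.Adj x y) :
    #{e ∈ H.edgeFinset | ¬ sym2Disjoint s(x, y) e} < H.degree x + H.degree y := by
  have hunion : {e ∈ H.edgeFinset | ¬ sym2Disjoint s(x, y) e} ⊆
      H.incidenceFinset x ∪ H.incidenceFinset y := by
    simp only [incidenceFinset_eq_filter, ← Finset.filter_or, not_sym2Disjoint_iff]
    exact Finset.monotone_filter_right _ fun e _ ↦ by simp
  have hinter : 0 < #(H.incidenceFinset x ∩ H.incidenceFinset y) :=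
    Finset.card_pos.2 ⟨s(x, y), by simp [incidenceSet, hxy]⟩
  have hcard := Finset.card_union_add_card_inter (H.incidenceFinset x) (H.incidenceFinset y)
  have hle := Finset.card_le_card hunion
  simp only [card_incidenceFinset_eq_degree] at hcard
  omega

lemma card_filter_incidenceFinset_avoiding {S : Finset V} (hc : c ∉ S) :
    #{e ∈ H.incidenceFinset c | ∀ v ∈ S, v ∉ e} = #(H.neighborFinset c \ S) := by
  have himage : {e ∈ H.incidenceFinset c | ∀ v ∈ S, v ∉ e} =
      (H.neighborFinset c \ S).image fun v ↦ s(c, v) := by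
    ext e
    simp only [Finset.mem_filter, mem_incidenceFinset, Finset.mem_image, Finset.mem_sdiff,
      mem_neighborFinset]
    constructor
    · rintro ⟨⟨he, v, rfl⟩, hS⟩
      exact ⟨v, ⟨he, fun hv ↦ hS v hv (Sym2.mem_mk_right c v)⟩, rfl⟩
    · rintro ⟨v, ⟨hcv, hv⟩, rfl⟩
      refine ⟨⟨hcv, Sym2.mem_mk_left c v⟩, fun w hw hwe ↦ ?_⟩
      rcases Sym2.mem_iff.1 hwe with rfl | rfl
      · exact hc hw
      · exact hv hw
  rw [himage, Finset.card_image_of_injective _ fun _ _ ↦ Sym2.congr_right.1]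

variable (H c) in
/-- The edges of `H` that do not contain the vertex `c`; together with the star
`H.incidenceFinset c` they make up all edges. -/
def edgesAvoiding : Finset (Sym2 V) :=
  {e ∈ H.edgeFinset | c ∉ e}

lemma mem_edgesAvoiding {e : Sym2 V} : e ∈ edgesAvoiding H c ↔ e ∈ H.edgeSet ∧ c ∉ e := by
  simp [edgesAvoiding]

variable (H c) in
lemma degree_add_card_edgesAvoiding :
    H.degree c + #(edgesAvoiding H c) = #H.edgeFinset := by
  rw [← card_incidenceFinset_eq_degree, incidenceFinset_eq_filter, edgesAvoiding,
    Finset.card_filter_add_card_filter_not]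

lemma card_filter_sym2Disjoint_incidenceFinset {e : Sym2 V} (hc : c ∉ e) :
    #{e' ∈ H.incidenceFinset c | sym2Disjoint e e'} = #(H.neighborFinset c \ e.toFinset) := by
  rw [← card_filter_incidenceFinset_avoiding (by simpa using hc)]
  exact congrArg Finset.card (Finset.filter_congr fun e' _ ↦ by simp [sym2Disjoint])

lemma card_toFinset_of_mem_edgesAvoiding {e : Sym2 V} (he : e ∈ edgesAvoiding H c) :
    #e.toFinset = 2 :=
  Sym2.card_toFinset_of_not_isDiag e (H.not_isDiag_of_mem_edgeSet (mem_edgesAvoiding.1 he).1)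

lemma degree_sub_two_le_card_neighborFinset_sdiff {e : Sym2 V} (he : e ∈ edgesAvoiding H c) :
    H.degree c - 2 ≤ #(H.neighborFinset c \ e.toFinset) := by
  simpa [card_toFinset_of_mem_edgesAvoiding he] using
    Finset.le_card_sdiff e.toFinset (H.neighborFinset c)

namespace CoversDisjointPairs

lemma sum_card_filter_sym2Disjoint_le (h : CoversDisjointPairs H f) {A B : Finset (Sym2 V)}
    (hA : A ⊆ H.edgeFinset) (hB : B ⊆ H.edgeFinset) :
    ∑ e ∈ A, #{e' ∈ B | sym2Disjoint e e'} ≤ #{e ∈ A | f e ∈ B} + #{e' ∈ B | f e' ∈ A} :=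
  sum_card_filter_le_of_eq_or_eq fun e he e' he' ↦
    h e (mem_edgeFinset.1 (hA he)) e' (mem_edgeFinset.1 (hB he'))

lemma sum_card_neighborFinset_sdiff_le (h : CoversDisjointPairs H f) (c : V) :
    ∑ e ∈ edgesAvoiding H c, #(H.neighborFinset c \ e.toFinset) ≤
      #{e ∈ edgesAvoiding H c | f e ∈ H.incidenceFinset c} + H.degree c :=
  calc ∑ e ∈ edgesAvoiding H c, #(H.neighborFinset c \ e.toFinset)
      = ∑ e ∈ edgesAvoiding H c, #{e' ∈ H.incidenceFinset c | sym2Disjoint e e'} :=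
        Finset.sum_congr rfl fun e he ↦
          (card_filter_sym2Disjoint_incidenceFinset (mem_edgesAvoiding.1 he).2).symm
    _ ≤ _ := h.sum_card_filter_sym2Disjoint_le (Finset.filter_subset _ _)
        (H.incidenceFinset_subset c)
    _ ≤ _ := by
        grw [Finset.card_filter_le (H.incidenceFinset c), card_incidenceFinset_eq_degree]

lemma card_edgesAvoiding_mul_le (h : CoversDisjointPairs H f) (c : V) :
    #(edgesAvoiding H c) * (H.degree c - 2) ≤
      #{e ∈ edgesAvoiding H c | f e ∈ H.incidenceFinset c} + H.degree c :=
  (Finset.card_nsmul_le_sum _ _ _ fun _ ↦ degree_sub_two_le_card_neighborFinset_sdiff).trans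
    (h.sum_card_neighborFinset_sdiff_le c)

lemma apply_mem_incidenceFinset (h : CoversDisjointPairs H f)
    (htight : #(edgesAvoiding H c) + H.degree c ≤ #(edgesAvoiding H c) * (H.degree c - 2))
    {e : Sym2 V} (he : e ∈ edgesAvoiding H c) : f e ∈ H.incidenceFinset c := by
  have hle := h.card_edgesAvoiding_mul_le c
  have heq : #{e ∈ edgesAvoiding H c | f e ∈ H.incidenceFinset c} = #(edgesAvoiding H c) :=
    (Finset.card_filter_le _ _).antisymm (by omega)
  exact Finset.card_filter_eq_iff.1 heq e he

lemma pairwise_edgesAvoiding_not_sym2Disjoint (h : CoversDisjointPairs H f)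
    (htight : #(edgesAvoiding H c) + H.degree c ≤ #(edgesAvoiding H c) * (H.degree c - 2)) :
    (edgesAvoiding H c : Set (Sym2 V)).Pairwise fun e e' ↦ ¬ sym2Disjoint e e' := by
  have hf : ∀ e ∈ edgesAvoiding H c, f e ∉ edgesAvoiding H c := fun e he hfe ↦
    (mem_edgesAvoiding.1 hfe).2
      ((mem_incidenceFinset ..).1 (h.apply_mem_incidenceFinset htight he)).2
  intro e he e' he' _ hd
  rcases h e (mem_edgesAvoiding.1 he).1 e' (mem_edgesAvoiding.1 he').1 hd with rfl | rfl
  · exact hf e he he'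
  · exact hf e' he' he

lemma adj_of_mem_edgesAvoiding (h : CoversDisjointPairs H f)
    (htight : #(edgesAvoiding H c) + H.degree c ≤ #(edgesAvoiding H c) * (H.degree c - 2))
    {e : Sym2 V} (he : e ∈ edgesAvoiding H c) {v : V} (hv : v ∈ e) : H.Adj c v := by
  by_contra hcv
  have hlt : H.degree c - 2 < #(H.neighborFinset c \ e.toFinset) := by
    have hlt : #(e.toFinset ∩ H.neighborFinset c) < #e.toFinset :=
      Finset.card_lt_card (inf_lt_left.2 fun hsub ↦
        hcv ((mem_neighborFinset ..).1 (hsub (Sym2.mem_toFinset.2 hv))))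
    rw [card_toFinset_of_mem_edgesAvoiding he] at hlt
    have hpos : 0 < #(edgesAvoiding H c) := Finset.card_pos.2 ⟨e, he⟩
    have htwo : 2 < H.degree c := by
      by_contra! hle
      rw [Nat.sub_eq_zero_of_le hle] at htight
      omega
    rw [Finset.card_sdiff, card_neighborFinset_eq_degree]
    omega
  have hsum : #(edgesAvoiding H c) * (H.degree c - 2) <
      ∑ e ∈ edgesAvoiding H c, #(H.neighborFinset c \ e.toFinset) := by
    rw [← smul_eq_mul, ← Finset.sum_const]
    exact Finset.sum_lt_sum (fun _ ↦ degree_sub_two_le_card_neighborFinset_sdiff) ⟨e, he, hlt⟩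
  have hle := h.sum_card_neighborFinset_sdiff_le c
  have := Finset.card_filter_le (edgesAvoiding H c) (f · ∈ H.incidenceFinset c)
  omega

lemma exists_card_edgesAvoiding_lt_degree (h : CoversDisjointPairs H f)
    (htight : #(edgesAvoiding H c) + H.degree c ≤ #(edgesAvoiding H c) * (H.degree c - 2))
    (hcard : 3 < #(edgesAvoiding H c)) : ∃ v, #(edgesAvoiding H c) < H.degree v := by
  obtain ⟨v, hv⟩ :=
    exists_forall_mem_of_pairwise_not_sym2Disjoint
      (h.pairwise_edgesAvoiding_not_sym2Disjoint htight) hcard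
  obtain ⟨e, he⟩ := Finset.card_pos.1 (by omega : 0 < #(edgesAvoiding H c))
  have hcv : H.Adj c v := h.adj_of_mem_edgesAvoiding htight he (hv e he)
  have hsub : insert s(c, v) (edgesAvoiding H c) ⊆ H.incidenceFinset v := by
    refine Finset.insert_subset (by simp [incidenceSet, hcv]) fun e he ↦ ?_
    exact (mem_incidenceFinset ..).2 ⟨(mem_edgesAvoiding.1 he).1, hv e he⟩
  refine ⟨v, ?_⟩
  rw [← card_incidenceFinset_eq_degree]
  refine lt_of_lt_of_le ?_ (Finset.card_le_card hsub)
  rw [Finset.card_insert_of_notMem (by simp [mem_edgesAvoiding])]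
  exact Nat.lt_succ_self _

lemma card_edgesAvoiding_ne_two (h : CoversDisjointPairs H f)
    (htight : #(edgesAvoiding H c) + H.degree c ≤ #(edgesAvoiding H c) * (H.degree c - 2)) :
    #(edgesAvoiding H c) ≠ 2 := by
  intro htwo
  obtain ⟨e₁, e₂, hne, hF⟩ := Finset.card_eq_two.1 htwo
  have he₁ : e₁ ∈ edgesAvoiding H c := by simp [hF]
  have he₂ : e₂ ∈ edgesAvoiding H c := by simp [hF]
  have hmeet : ¬ sym2Disjoint e₁ e₂ :=
    h.pairwise_edgesAvoiding_not_sym2Disjoint htight he₁ he₂ hne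
  let S : Finset V := e₁.toFinset ∪ e₂.toFinset
  let B : Finset (Sym2 V) := {e ∈ H.incidenceFinset c | ∀ v ∈ S, v ∉ e}
  have hcS : c ∉ S := by simp [S, (mem_edgesAvoiding.1 he₁).2, (mem_edgesAvoiding.1 he₂).2]
  have hB : H.degree c - 3 ≤ #B := by
    rw [card_filter_incidenceFinset_avoiding hcS, ← card_neighborFinset_eq_degree]
    exact (Nat.sub_le_sub_left (card_toFinset_union_toFinset_le_three hmeet) _).trans
      (Finset.le_card_sdiff _ _)
  have hd : ∀ e ∈ edgesAvoiding H c, ∀ e' ∈ B, sym2Disjoint e e' := by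
    intro e he e' he' v hv
    refine (Finset.mem_filter.1 he').2 v ?_
    rw [hF, Finset.mem_insert, Finset.mem_singleton] at he
    rcases he with rfl | rfl <;> simp [S, hv]
  have hle : #(edgesAvoiding H c) * #B ≤ #(edgesAvoiding H c) + #B :=
    card_mul_card_le_card_add_card_of_eq_or_eq fun e he e' he' ↦
      h e (mem_edgesAvoiding.1 he).1 e'
        ((mem_incidenceFinset ..).1 (Finset.mem_filter.1 he').1).1 (hd e he e' he')
  rw [htwo] at hle htight
  omega

end CoversDisjointPairs

end UpperBound

namespace CoversDisjointPairs

variable [Fintype V] {H : SimpleGraph V} [DecidableRel H.Adj] {f : Sym2 V → Sym2 V}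

lemma card_edgeFinset_le_of_degree_le (h : CoversDisjointPairs H f) {d : ℕ}
    (hd : ∀ v, H.degree v ≤ d) : #H.edgeFinset ≤ 2 * d + 1 := by
  classical
  by_contra! hlt
  have hthree : ∀ e ∈ H.edgeFinset, 3 ≤ #{e' ∈ H.edgeFinset | sym2Disjoint e e'} := by
    intro e he
    induction e with | _ x y
    have hxy : H.Adj x y := mem_edgeFinset.1 he
    have hmeet := card_filter_not_sym2Disjoint_lt hxy
    have hsplit : #{e ∈ H.edgeFinset | sym2Disjoint s(x, y) e} +
        #{e ∈ H.edgeFinset | ¬ sym2Disjoint s(x, y) e} = #H.edgeFinset :=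
      Finset.card_filter_add_card_filter_not _
    have := hd x
    have := hd y
    omega
  have hle : #H.edgeFinset * 3 ≤ #H.edgeFinset + #H.edgeFinset :=
    calc #H.edgeFinset * 3
        ≤ ∑ e ∈ H.edgeFinset, #{e' ∈ H.edgeFinset | sym2Disjoint e e'} :=
          Finset.card_nsmul_le_sum _ _ _ hthree
      _ ≤ _ := h.sum_card_filter_sym2Disjoint_le subset_rfl subset_rfl
      _ ≤ _ := add_le_add (Finset.card_filter_le _ _) (Finset.card_filter_le _ _)
  omega

theorem card_edgeFinset_le_card (h : CoversDisjointPairs H f) (hV : 7 ≤ Fintype.card V) :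
    #H.edgeFinset ≤ Fintype.card V := by
  classical
  by_contra! hlt
  have : Nonempty V := Fintype.card_pos_iff.1 (by omega)
  obtain ⟨c, hc⟩ := H.exists_maximal_degree_vertex
  have hmax (v : V) : H.degree v ≤ H.degree c := hc ▸ H.degree_le_maxDegree v
  have hsplit := degree_add_card_edgesAvoiding H c
  have hdeg := H.degree_lt_card_verts c
  have hlarge : 4 ≤ H.degree c := by
    have := h.card_edgeFinset_le_of_degree_le hmax
    omega
  have hle : #(edgesAvoiding H c) * (H.degree c - 2) ≤ #(edgesAvoiding H c) + H.degree c :=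
    (h.card_edgesAvoiding_mul_le c).trans (Nat.add_le_add_right (Finset.card_filter_le _ _) _)
  have hcases : #(edgesAvoiding H c) = 4 ∧ H.degree c = 4 ∨
      #(edgesAvoiding H c) = 2 ∧ H.degree c = 6 :=
    eq_four_or_eq_two_of_mul_sub_two_le (by omega) hlarge (by omega) hle
  have htight : #(edgesAvoiding H c) + H.degree c ≤ #(edgesAvoiding H c) * (H.degree c - 2) := by
    rcases hcases with ⟨ha, ht⟩ | ⟨ha, ht⟩ <;> simp [ha, ht]
  rcases hcases with ⟨ha, ht⟩ | ⟨ha, -⟩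
  · obtain ⟨v, hv⟩ := h.exists_card_edgesAvoiding_lt_degree htight (by omega)
    exact absurd (hmax v) (by omega)
  · exact h.card_edgesAvoiding_ne_two htight ha

end CoversDisjointPairs

/-- h(n, 2K₂) = n for all n ≥ 7. -/
theorem stmt7 (n : ℕ) (hn : 7 ≤ n) : hNum n (matching 2) = n := by
  classical
  refine IsGreatest.csSup_eq ⟨?_, ?_⟩
  · simpa using exists_ncard_edgeSet_eq_and_noFreeCopy_matching_two (V := Fin n)
      (by rw [Fintype.card_fin]; omega)
  · rintro m ⟨H, f, rfl, hf, hfree⟩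
    have hcov : CoversDisjointPairs H f := (noFreeCopy_matching_two_iff hf).1 hfree
    rw [← coe_edgeFinset, Set.ncard_coe_finset]
    simpa using hcov.card_edgeFinset_le_card (by simpa using hn)
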